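/- arXiv:1609.07247 — 4 statements merged into one kernel-verified Lean document; each statement's English description precedes it below -/
import Mathlib

section
/- Let G be a finite non-cyclic group. If the cyclicizer Cyc(G) has more than one element, then |G| ≥ 3·|Cyc(G)| (equivalently, the index of Cyc(G) in G is at least 3). -/
/-- The cyclicizer of a group `G`: the set of `y` such that `⟨x, y⟩` is cyclic
for every `x ∈ G`. -/
def cyclicizer (G : Type*) [Group G] : Set G :=
  {y | ∀ x : G, IsCyclic (Subgroup.closure ({x, y} : Set G))}

/-!
Every element `c` of `Cyc(G)` can be absorbed into a cyclic subgroup: `⟨x⟩` and `c` lie in a common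
`⟨u⟩`. Hence if `G ⧸ Cyc(G)` is generated by the image of `x`, then finitely many elements
`x ^ nᵢ * cᵢ` of `G` always lie in a common cyclic subgroup, obtained by absorbing the `cᵢ` into
`⟨x⟩` one at a time. A group with a non-cyclic finitely generated subgroup therefore has a
non-cyclic quotient `G ⧸ Cyc(G)`, and a non-cyclic group has at least four elements.
-/

open Subgroup

section

variable {G : Type*} [Group G]

theorem isCyclic_closure_iff_exists_subset_zpowers {s : Set G} :
    IsCyclic (closure s) ↔ ∃ u : G, s ⊆ zpowers u := by
  refine ⟨fun h ↦ ?_, fun ⟨u, hu⟩ ↦ ?_⟩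
  · obtain ⟨u, hu⟩ := (closure s).isCyclic_iff_exists_zpowers_eq_top.mp h
    exact ⟨u, hu ▸ subset_closure⟩
  · have hle : closure s ≤ zpowers u := (closure_le _).mpr hu
    exact isCyclic_of_injective (inclusion hle) (inclusion_injective hle)

theorem four_le_card_of_not_isCyclic (hG : ¬ IsCyclic G) : 4 ≤ ENat.card G := by
  rcases finite_or_infinite G with _ | _
  · suffices 4 ≤ Nat.card G by rw [ENat.card_eq_coe_natCard]; exact_mod_cast this
    by_contra! hlt
    have hpos : 0 < Nat.card G := Nat.card_pos
    obtain h | h | h : Nat.card G = 1 ∨ Nat.card G = 2 ∨ Nat.card G = 3 := by omega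
    · have := (Nat.card_eq_one_iff_unique.mp h).1
      exact hG isCyclic_of_subsingleton
    · exact hG (isCyclic_of_prime_card h)
    · exact hG (isCyclic_of_prime_card h)
  · simp

theorem mul_card_le_card_of_le_card_quotient {H : Subgroup G} [Finite (G ⧸ H)] {n : ℕ}
    (h : n ≤ ENat.card (G ⧸ H)) : n * Nat.card H ≤ Nat.card G := by
  rw [ENat.card_eq_coe_natCard, Nat.cast_le] at h
  rw [H.card_eq_card_quotient_mul_card_subgroup]
  exact Nat.mul_le_mul_right _ h

theorem mem_cyclicizer_iff_exists_zpowers {y : G} :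
    y ∈ cyclicizer G ↔ ∀ x : G, ∃ u : G, x ∈ zpowers u ∧ y ∈ zpowers u := by
  simp only [cyclicizer, Set.mem_ofPred_eq, isCyclic_closure_iff_exists_subset_zpowers,
    Set.pair_subset_iff, SetLike.mem_coe]

variable (G) in
/-- The cyclicizer `Cyc(G)` as a subgroup of `G`, so that its quotient and index are available. -/
def cyclicizerSubgroup : Subgroup G where
  carrier := cyclicizer G
  one_mem' := mem_cyclicizer_iff_exists_zpowers.mpr fun x ↦ ⟨x, mem_zpowers x, one_mem _⟩
  mul_mem' {a b} ha hb := mem_cyclicizer_iff_exists_zpowers.mpr fun x ↦ by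
    obtain ⟨w, hxw, haw⟩ := mem_cyclicizer_iff_exists_zpowers.mp ha x
    obtain ⟨u, hwu, hbu⟩ := mem_cyclicizer_iff_exists_zpowers.mp hb w
    have hle : zpowers w ≤ zpowers u := zpowers_le.mpr hwu
    exact ⟨u, hle hxw, mul_mem (hle haw) hbu⟩
  inv_mem' {a} ha := mem_cyclicizer_iff_exists_zpowers.mpr fun x ↦ by
    obtain ⟨u, hxu, hau⟩ := mem_cyclicizer_iff_exists_zpowers.mp ha x
    exact ⟨u, hxu, inv_mem hau⟩

theorem cyclicizerSubgroup_le_center : cyclicizerSubgroup G ≤ center G := by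
  refine fun y hy ↦ mem_center_iff.mpr fun x ↦ ?_
  obtain ⟨u, ⟨m, rfl⟩, ⟨n, rfl⟩⟩ := mem_cyclicizer_iff_exists_zpowers.mp hy x
  exact zpow_mul_comm u m n

instance cyclicizerSubgroup_normal : (cyclicizerSubgroup G).Normal where
  conj_mem y hy g := by
    rwa [mem_center_iff.mp (cyclicizerSubgroup_le_center hy) g, mul_inv_cancel_right]

theorem exists_subset_zpowers_of_isCyclic_quotient_cyclicizer
    [IsCyclic (G ⧸ cyclicizerSubgroup G)] {s : Set G} (hs : s.Finite) :
    ∃ u : G, s ⊆ zpowers u := by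
  obtain ⟨q, hq⟩ := IsCyclic.exists_generator (α := G ⧸ cyclicizerSubgroup G)
  obtain ⟨x, rfl⟩ := QuotientGroup.mk_surjective q
  suffices ∃ u : G, x ∈ zpowers u ∧ s ⊆ zpowers u from this.imp fun _ ↦ And.right
  induction s, hs using Set.Finite.induction_on with
  | empty => exact ⟨x, mem_zpowers x, Set.empty_subset _⟩
  | @insert g s _ _ ih =>
    obtain ⟨w, hxw, hsw⟩ := ih
    obtain ⟨n, hn⟩ := hq g
    have hc : (x ^ n)⁻¹ * g ∈ cyclicizerSubgroup G := QuotientGroup.eq.mp hn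
    obtain ⟨u, hwu, hcu⟩ := mem_cyclicizer_iff_exists_zpowers.mp hc w
    have hle : zpowers w ≤ zpowers u := zpowers_le.mpr hwu
    have hgu : g ∈ zpowers u := by
      simpa only [mul_inv_cancel_left] using mul_mem (zpow_mem (hle hxw) n) hcu
    exact ⟨u, hle hxw, Set.insert_subset hgu (hsw.trans hle)⟩

theorem isCyclic_of_fg_of_isCyclic_quotient_cyclicizer
    [IsCyclic (G ⧸ cyclicizerSubgroup G)] {H : Subgroup G} (hH : H.FG) : IsCyclic H := by
  obtain ⟨s, rfl⟩ := hH
  exact isCyclic_closure_iff_exists_subset_zpowers.mpr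
    (exists_subset_zpowers_of_isCyclic_quotient_cyclicizer s.finite_toSet)

theorem cyclicizer_index_ge_three_general {H : Subgroup G} (hfg : H.FG) (hH : ¬ IsCyclic H) :
    4 ≤ ENat.card (G ⧸ cyclicizerSubgroup G) :=
  four_le_card_of_not_isCyclic fun _ ↦
    hH (isCyclic_of_fg_of_isCyclic_quotient_cyclicizer hfg)

end

theorem cyclicizer_index_ge_three (G : Type*) [Group G] [Finite G]
    (hG : ¬ IsCyclic G) (h : 1 < Nat.card (cyclicizer G)) :
    3 * Nat.card (cyclicizer G) ≤ Nat.card G :=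
  mul_card_le_card_of_le_card_quotient (H := cyclicizerSubgroup G) <| le_trans (by norm_num) <|
    cyclicizer_index_ge_three_general Group.FG.out (mt topEquiv.isCyclic.mp hG)
end

section
/- Let G be a finite non-cyclic group of order n, and let k = |G \ Cyc(G)| be the number of vertices of the non-cyclic graph Γ_G. Then k < n < 2k. -/
/-!
Every `x` lies in a maximal cyclic subgroup `H`. If `a` generates `H` and `y` is in the cyclicizer,
then `⟨a, y⟩` is a cyclic subgroup containing `H`, so `y ∈ H` by maximality. Choosing `x` outside
the cyclicizer gives proper inclusions `Cyc(G) ⊂ H ⊂ G`, so `2 |Cyc(G)| < 2 |H| ≤ |G|` by Lagrange's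
theorem.
-/

section

variable {G : Type*} [Group G]

theorem one_mem_cyclicizer : (1 : G) ∈ cyclicizer G := fun x ↦ by
  rw [Set.pair_comm, Subgroup.closure_insert_one, ← Subgroup.zpowers_eq_closure]
  infer_instance

theorem cyclicizer_subset_of_maximal_isCyclic {H : Subgroup G}
    (hH : Maximal (fun K : Subgroup G ↦ IsCyclic K) H) : cyclicizer G ⊆ H := fun y hy ↦ by
  obtain ⟨a, rfl⟩ := H.isCyclic_iff_exists_zpowers_eq_top.mp hH.prop
  have ha : Subgroup.zpowers a ≤ Subgroup.closure {a, y} :=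
    Subgroup.zpowers_le.mpr (Subgroup.subset_closure (Set.mem_insert a {y}))
  exact hH.le_of_ge (hy a) ha (Subgroup.subset_closure (Set.mem_insert_of_mem a rfl))

theorem exists_maximal_isCyclic_mem [WellFoundedGT (Subgroup G)] (x : G) :
    ∃ H : Subgroup G, Maximal (fun K : Subgroup G ↦ IsCyclic K) H ∧ x ∈ H := by
  obtain ⟨H, hxH, hH⟩ :=
    exists_maximal_ge_of_wellFoundedGT (fun K : Subgroup G ↦ IsCyclic K) _
      (Subgroup.isCyclic_zpowers x)
  exact ⟨H, hH, Subgroup.zpowers_le.mp hxH⟩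

theorem ne_top_of_isCyclic (hG : ¬ IsCyclic G) {H : Subgroup G} (hH : IsCyclic H) : H ≠ ⊤ := by
  rintro rfl
  exact hG (Subgroup.topEquiv.isCyclic.mp hH)

theorem exists_notMem_cyclicizer [WellFoundedGT (Subgroup G)] (hG : ¬ IsCyclic G) :
    ∃ x, x ∉ cyclicizer G := by
  obtain ⟨H, hH, -⟩ := exists_maximal_isCyclic_mem (1 : G)
  obtain ⟨x, hx⟩ := SetLike.exists_not_mem_of_ne_top H (ne_top_of_isCyclic hG hH.prop) rfl
  exact ⟨x, fun hxc ↦ hx (cyclicizer_subset_of_maximal_isCyclic hH hxc)⟩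

theorem exists_cyclicizer_ssubset_ne_top [WellFoundedGT (Subgroup G)] (hG : ¬ IsCyclic G) :
    ∃ H : Subgroup G, cyclicizer G ⊂ H ∧ H ≠ ⊤ := by
  obtain ⟨x, hx⟩ := exists_notMem_cyclicizer hG
  obtain ⟨H, hH, hxH⟩ := exists_maximal_isCyclic_mem x
  exact ⟨H, ⟨cyclicizer_subset_of_maximal_isCyclic hH, fun h ↦ hx (h hxH)⟩,
    ne_top_of_isCyclic hG hH.prop⟩

theorem two_mul_card_le_of_ne_top [Finite G] {H : Subgroup G} (hH : H ≠ ⊤) :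
    2 * Nat.card H ≤ Nat.card G := by
  rw [← H.index_mul_card]
  exact Nat.mul_le_mul_right _ (H.one_lt_index_of_ne_top hH)

theorem two_mul_ncard_cyclicizer_lt [Finite G] (hG : ¬ IsCyclic G) :
    2 * (cyclicizer G).ncard < Nat.card G := by
  obtain ⟨H, hlt, hH⟩ := exists_cyclicizer_ssubset_ne_top hG
  calc 2 * (cyclicizer G).ncard
    _ < 2 * Nat.card H := Nat.mul_lt_mul_of_pos_left (Set.ncard_lt_ncard hlt) two_pos
    _ ≤ Nat.card G := two_mul_card_le_of_ne_top hH

end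

theorem vertex_count_bounds (G : Type*) [Group G] [Finite G]
    (hG : ¬ IsCyclic G) (n k : ℕ) (hn : n = Nat.card G)
    (hk : k = Nat.card {g : G // g ∉ cyclicizer G}) :
    k < n ∧ n < 2 * k := by
  have hsum : (cyclicizer G).ncard + k = n := by
    rw [hk, hn]
    exact Set.ncard_add_ncard_compl (cyclicizer G)
  have hpos : 0 < (cyclicizer G).ncard := (Set.ncard_pos).mpr ⟨1, one_mem_cyclicizer⟩
  have hlt : 2 * (cyclicizer G).ncard < n := hn ▸ two_mul_ncard_cyclicizer_lt hG
  lia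
end

section
/- Let G be a finite non-cyclic group. Then every vertex of the non-cyclic graph Γ_G has degree at least 2; that is, for every x ∈ G \ Cyc(G) there exist at least two distinct elements y ∈ G \ Cyc(G) with y ≠ x such that the subgroup generated by {x, y} is not cyclic. -/
/- If `y` is a neighbour of `x` in the non-cyclic graph, then so is `x * y`, because `{x, y}` and
`{x, x * y}` generate the same subgroup. Of the coincidences among `x`, `y` and `x * y`, each forces
one of `x`, `y` to be a power of the other, and then `⟨x, y⟩` would be cyclic. -/

section Generators

open Subgroup

variable {G : Type*} [Group G] {x y : G}

theorem closure_insert_mul_of_mem_closure {s : Set G} (hx : x ∈ closure s) :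
    closure (insert (x * y) s) = closure (insert y s) := by
  refine eq_of_forall_ge_iff fun K ↦ ?_
  simp only [closure_le, Set.insert_subset_iff, SetLike.mem_coe]
  exact and_congr_left fun hs ↦ mul_mem_cancel_left ((closure_le K).2 hs hx)

theorem closure_pair_self_mul (x y : G) : closure {x, x * y} = closure {x, y} := by
  rw [Set.pair_comm, closure_insert_mul_of_mem_closure (mem_closure_singleton_self x),
    Set.pair_comm]

theorem closure_pair_eq_zpowers_of_mem_zpowers (h : y ∈ zpowers x) :
    closure {x, y} = zpowers x :=
  closure_eq_of_le _ (Set.pair_subset (mem_zpowers x) h)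
    (zpowers_le.2 (subset_closure (Set.mem_insert x {y})))

theorem notMem_zpowers_of_not_isCyclic_closure_pair (h : ¬ IsCyclic (closure {x, y})) :
    y ∉ zpowers x := by
  intro hy
  rw [closure_pair_eq_zpowers_of_mem_zpowers hy] at h
  exact h (isCyclic_zpowers x)

theorem notMem_cyclicizer_iff : y ∉ cyclicizer G ↔ ∃ x, ¬ IsCyclic (closure {x, y}) :=
  not_forall

end Generators

theorem min_degree_ge_two_general (G : Type*) [Group G] :
    ∀ x : G, x ∉ cyclicizer G →
      ∃ y z : G, y ∉ cyclicizer G ∧ z ∉ cyclicizer G ∧ y ≠ x ∧ z ≠ x ∧ y ≠ z ∧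
        ¬ IsCyclic (Subgroup.closure ({x, y} : Set G)) ∧
        ¬ IsCyclic (Subgroup.closure ({x, z} : Set G)) := by
  intro x hx
  obtain ⟨y, hyx⟩ := notMem_cyclicizer_iff.1 hx
  have hxy : ¬ IsCyclic (Subgroup.closure {x, y}) := by rwa [Set.pair_comm]
  have hx_mul : ¬ IsCyclic (Subgroup.closure {x, x * y}) := by rwa [closure_pair_self_mul]
  have hy_notMem : y ∉ Subgroup.zpowers x := notMem_zpowers_of_not_isCyclic_closure_pair hxy
  have hx_notMem : x ∉ Subgroup.zpowers y := notMem_zpowers_of_not_isCyclic_closure_pair hyx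
  have hy_ne_x : y ≠ x := (ne_of_mem_of_not_mem (Subgroup.mem_zpowers x) hy_notMem).symm
  have hy_ne_one : y ≠ 1 := (ne_of_mem_of_not_mem (one_mem _) hy_notMem).symm
  have hx_ne_one : x ≠ 1 := (ne_of_mem_of_not_mem (one_mem _) hx_notMem).symm
  exact ⟨y, x * y, notMem_cyclicizer_iff.2 ⟨x, hxy⟩, notMem_cyclicizer_iff.2 ⟨x, hx_mul⟩,
    hy_ne_x, mul_ne_left.2 hy_ne_one, (mul_ne_right.2 hx_ne_one).symm, hxy, hx_mul⟩

theorem min_degree_ge_two (G : Type*) [Group G] [Finite G]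
    (hG : ¬ IsCyclic G) :
    ∀ x : G, x ∉ cyclicizer G →
      ∃ y z : G, y ∉ cyclicizer G ∧ z ∉ cyclicizer G ∧ y ≠ x ∧ z ≠ x ∧ y ≠ z ∧
        ¬ IsCyclic (Subgroup.closure ({x, y} : Set G)) ∧
        ¬ IsCyclic (Subgroup.closure ({x, z} : Set G)) :=
  min_degree_ge_two_general G
end

section
/- Let G be a finite non-cyclic group that is acceptable, i.e., every element of G has order 1, 2 or 3, and G contains at least one element of order 2 and at least one element of order 3. Then Cyc(G) = {e}, and the complement graph Γ̄_G is a disjoint union of copies of P₂ together with isolated vertices; that is, every vertex of Γ̄_G has degree at most 1 (each element of order 3 is adjacent in Γ̄_G only to its inverse, and each element of order 2 is isolated in Γ̄_G). -/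
/-!
If every non-identity element has prime order, then every non-identity element generates a maximal
cyclic subgroup: `⟨x, y⟩` with `x ≠ 1` is cyclic only when `y ∈ ⟨x⟩`. Hence a non-identity element
of the cyclicizer would generate the whole group, and the neighbours of `x` in the complement graph
are the other non-identity elements of `⟨x⟩`: only `x⁻¹` if `x` has order 3, none if `x` has
order 2.
-/

section Zpowers

variable {G : Type*} [Group G] {x y g : G}

theorem mem_zpowers_iff_of_orderOf_eq_two (hx : orderOf x = 2) :
    y ∈ Subgroup.zpowers x ↔ y = 1 ∨ y = x := by
  classical
  have hfin : IsOfFinOrder x := orderOf_pos_iff.mp (by omega)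
  have hrange : Finset.range 2 = {0, 1} := rfl
  simp only [hfin.mem_zpowers_iff_mem_range_orderOf, hx, hrange, Finset.image_insert,
    Finset.image_singleton, pow_zero, pow_one, Finset.mem_insert, Finset.mem_singleton]

theorem mem_zpowers_iff_of_orderOf_eq_three (hx : orderOf x = 3) :
    y ∈ Subgroup.zpowers x ↔ y = 1 ∨ y = x ∨ y = x⁻¹ := by
  classical
  have hfin : IsOfFinOrder x := orderOf_pos_iff.mp (by omega)
  have hrange : Finset.range 3 = {0, 1, 2} := rfl
  have hsq : x ^ 2 = x⁻¹ := by
    rw [eq_inv_iff_mul_eq_one, ← pow_succ]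
    exact orderOf_dvd_iff_pow_eq_one.mp hx.dvd
  simp only [hfin.mem_zpowers_iff_mem_range_orderOf, hx, hrange, Finset.image_insert,
    Finset.image_singleton, pow_zero, pow_one, hsq, Finset.mem_insert, Finset.mem_singleton]

theorem mem_zpowers_of_mem_zpowers_of_prime_orderOf (hg : (orderOf g).Prime)
    (hxg : x ∈ Subgroup.zpowers g) (hx : x ≠ 1) : g ∈ Subgroup.zpowers x := by
  obtain ⟨k, rfl⟩ := Subgroup.mem_zpowers_iff.mp hxg
  have hk : ¬ (orderOf g : ℤ) ∣ k := mt orderOf_dvd_iff_zpow_eq_one.mp hx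
  have hcoprime : IsCoprime (orderOf g : ℤ) k :=
    (Nat.prime_iff_prime_int.mp hg).coprime_iff_not_dvd.mpr hk
  exact mem_zpowers_zpow_iff.mpr (Int.isCoprime_iff_gcd_eq_one.mp hcoprime.symm)

end Zpowers

section ClosurePair

variable {G : Type*} [Group G] {x y : G}

theorem isCyclic_closure_pair_iff :
    IsCyclic (Subgroup.closure ({x, y} : Set G)) ↔
      ∃ g : G, x ∈ Subgroup.zpowers g ∧ y ∈ Subgroup.zpowers g := by
  have hle (H : Subgroup G) : Subgroup.closure ({x, y} : Set G) ≤ H ↔ x ∈ H ∧ y ∈ H := by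
    rw [Subgroup.closure_le, Set.pair_subset_iff, SetLike.mem_coe, SetLike.mem_coe]
  constructor
  · intro hcyclic
    obtain ⟨g, hg⟩ := (Subgroup.isCyclic_iff_exists_zpowers_eq_top _).mp hcyclic
    exact ⟨g, (hle _).mp hg.ge⟩
  · rintro ⟨g, hg⟩
    exact Subgroup.isCyclic_of_le ((hle _).mpr hg)

theorem isCyclic_closure_pair_iff_mem_zpowers (hprime : ∀ g : G, g ≠ 1 → (orderOf g).Prime)
    (hx : x ≠ 1) :
    IsCyclic (Subgroup.closure ({x, y} : Set G)) ↔ y ∈ Subgroup.zpowers x := by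
  rw [isCyclic_closure_pair_iff]
  constructor
  · rintro ⟨g, hxg, hyg⟩
    have hg : g ≠ 1 := by
      rintro rfl
      exact hx (by simpa using hxg)
    have hgx := mem_zpowers_of_mem_zpowers_of_prime_orderOf (hprime g hg) hxg hx
    exact Subgroup.zpowers_le_of_mem hgx hyg
  · exact fun hy => ⟨x, Subgroup.mem_zpowers x, hy⟩

end ClosurePair

section Cyclicizer

variable {G : Type*} [Group G]

theorem cyclicizer_eq_singleton_one (hG : ¬ IsCyclic G)
    (hprime : ∀ g : G, g ≠ 1 → (orderOf g).Prime) : cyclicizer G = {1} := by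
  refine Set.eq_singleton_iff_unique_mem.mpr ⟨one_mem_cyclicizer, fun y hy => ?_⟩
  by_contra hy1
  refine hG ⟨y, fun x => ?_⟩
  have hcyclic := hy x
  rwa [Set.pair_comm, isCyclic_closure_pair_iff_mem_zpowers hprime hy1] at hcyclic

end Cyclicizer

theorem acceptable_group_compl_structure_general (G : Type*) [Group G]
    (hG : ¬ IsCyclic G) (hprime : ∀ g : G, g ≠ 1 → (orderOf g).Prime) :
    cyclicizer G = {1} ∧
    (∀ x : G, orderOf x = 3 → ∀ y : G, y ∉ cyclicizer G → y ≠ x →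
      (IsCyclic (Subgroup.closure ({x, y} : Set G)) ↔ y = x⁻¹)) ∧
    (∀ x : G, orderOf x = 2 → ∀ y : G, y ∉ cyclicizer G → y ≠ x →
      ¬ IsCyclic (Subgroup.closure ({x, y} : Set G))) := by
  have hcyc := cyclicizer_eq_singleton_one hG hprime
  simp only [hcyc, Set.mem_singleton_iff, true_and]
  refine ⟨fun x hx y hy hyx => ?_, fun x hx y hy hyx => ?_⟩
  · have hx1 : x ≠ 1 := by rintro rfl; simp at hx
    rw [isCyclic_closure_pair_iff_mem_zpowers hprime hx1, mem_zpowers_iff_of_orderOf_eq_three hx,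
      or_iff_right hy, or_iff_right hyx]
  · have hx1 : x ≠ 1 := by rintro rfl; simp at hx
    rw [isCyclic_closure_pair_iff_mem_zpowers hprime hx1, mem_zpowers_iff_of_orderOf_eq_two hx]
    exact not_or_intro hy hyx

theorem acceptable_group_compl_structure (G : Type*) [Group G] [Finite G]
    (hG : ¬ IsCyclic G)
    (hord : ∀ g : G, orderOf g = 1 ∨ orderOf g = 2 ∨ orderOf g = 3)
    (h2 : ∃ g : G, orderOf g = 2) (h3 : ∃ g : G, orderOf g = 3) :
    cyclicizer G = {1} ∧
    (∀ x : G, orderOf x = 3 → ∀ y : G, y ∉ cyclicizer G → y ≠ x →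
      (IsCyclic (Subgroup.closure ({x, y} : Set G)) ↔ y = x⁻¹)) ∧
    (∀ x : G, orderOf x = 2 → ∀ y : G, y ∉ cyclicizer G → y ≠ x →
      ¬ IsCyclic (Subgroup.closure ({x, y} : Set G))) := by
  refine acceptable_group_compl_structure_general G hG fun g hg => ?_
  rcases hord g with h | h | h
  · exact absurd (orderOf_eq_one_iff.mp h) hg
  · exact h ▸ Nat.prime_two
  · exact h ▸ Nat.prime_three
end
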